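/- arXiv:2601.03208 — 3 statements merged into one kernel-verified Lean document; each statement's English description precedes it below -/
import Mathlib

section
/- Let I be a monomial ideal of R = K[x_1,…,x_n] that is not a principal ideal. Then depth(R/I) = depth(R/sgn(I)). -/
open MvPolynomial

/-- The monomial ideal of `R = K[x_1,…,x_n]` generated by the monomials `x^{v j}`,
`j = 1, …, q`, with exponent vectors `v j ∈ ℕ^n`. -/
noncomputable def monIdeal (K : Type) [Field K] {n q : ℕ} (v : Fin q → Fin n →₀ ℕ) :
    Ideal (MvPolynomial (Fin n) K) :=
  Ideal.span (Set.range fun j => monomial (v j) (1 : K))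

/-- The exponent vectors `v j` are pairwise non-comparable in the componentwise order,
i.e. the corresponding monomials form an anti-chain under divisibility.  Equivalently,
`{x^{v j}}` is the (unique) minimal monomial generating set `G(I)` of the monomial ideal
`I` it generates. -/
def AntichainFam {n q : ℕ} (v : Fin q → Fin n →₀ ℕ) : Prop :=
  ∀ j k : Fin q, v j ≤ v k → j = k

/-- The signature of the family `v` of exponent vectors (the columns of the incidence
matrix `A`): for each row `i`, the `(i,j)` entry of the signature matrix is the position
of `A i j = v j i` in the ascending list of the distinct entries of the `i`-th row of `A`,
i.e. the number of distinct values in row `i` that are strictly smaller than `v j i`.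
The columns of the resulting matrix are the exponent vectors of the generators of the
signature ideal `sgn(I) = monIdeal K (sgnExp v)`. -/
noncomputable def sgnExp {n q : ℕ} (v : Fin q → Fin n →₀ ℕ) : Fin q → Fin n →₀ ℕ :=
  fun j => Finsupp.equivFunOnFinite.symm fun i =>
    ((Finset.univ.image fun k : Fin q => v k i).filter fun m => m < v j i).card

/-- The graded maximal ideal `(x_1, …, x_n)` of `K[x_1,…,x_n]`. -/
noncomputable def mIdeal (K : Type) [Field K] (n : ℕ) : Ideal (MvPolynomial (Fin n) K) :=
  Ideal.span (Set.range (X : Fin n → MvPolynomial (Fin n) K))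

/-- The depth of `R/I` with respect to the maximal ideal `(x_1, …, x_n)`: the largest
length of an `R/I`-regular sequence consisting of elements of `(x_1, …, x_n)`. -/
noncomputable def depthQuot (K : Type) [Field K] (n : ℕ)
    (I : Ideal (MvPolynomial (Fin n) K)) : ℕ :=
  sSup { k : ℕ | ∃ rs : List (MvPolynomial (Fin n) K), rs.length = k ∧
    (∀ r ∈ rs, r ∈ mIdeal K n) ∧
    RingTheory.Sequence.IsRegular (MvPolynomial (Fin n) K ⧸ I) rs }
section General

open CategoryTheory Abelian RingTheory.Sequence

theorem weaklyReg_retract {R : Type*} [CommRing R] (rs : List R) {M N : Type*} [AddCommGroup M]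
    [AddCommGroup N] [Module R M] [Module R N] (i : N →ₗ[R] M) (p : M →ₗ[R] N)
    (h : ∀ x, p (i x) = x) (hM : IsWeaklyRegular M rs) : IsWeaklyRegular N rs := by
  induction rs generalizing M N with
  | nil => simp
  | cons r rs ih =>
    rw [isWeaklyRegular_cons_iff] at hM ⊢
    refine ⟨hM.1.of_injective i (Function.LeftInverse.injective h), ?_⟩
    refine ih (QuotSMulTop.map r i) (QuotSMulTop.map r p) ?_ hM.2
    intro x
    obtain ⟨x, rfl⟩ := Submodule.Quotient.mk_surjective _ x
    simp [h]

theorem descend {R B : Type} [CommRing R] [CommRing B] [IsNoetherianRing R] [Algebra R B]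
    [Module.Finite R B] (m : Ideal R) (d : ℕ) (M : Type) [AddCommGroup M] [Module B M]
    [Module.Finite B M]
    (h : ∀ i < d, Subsingleton (Ext (ModuleCat.of B (B ⧸ m.map (algebraMap R B)))
      (ModuleCat.of B M) i)) :
    ∃ rs : List R, rs.length = d ∧ (∀ r ∈ rs, r ∈ m) ∧
      IsWeaklyRegular M (rs.map (algebraMap R B)) := by
  induction d generalizing M with
  | zero => exact ⟨[], by simp⟩
  | succ d ih =>
    let : Module R M := Module.compHom M (algebraMap R B)
    have : IsScalarTower R B M := ⟨fun a b c => by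
      rw [Algebra.smul_def, mul_smul]; rfl⟩
    have : Module.Finite R M := Module.Finite.trans B M
    have h0 : Subsingleton (ModuleCat.of B (B ⧸ m.map (algebraMap R B)) ⟶ ModuleCat.of B M) :=
      Ext.addEquiv₀.subsingleton_congr.mp (h 0 d.zero_lt_succ)
    have h1 : Subsingleton ((B ⧸ m.map (algebraMap R B)) →ₗ[B] M) :=
      (ModuleCat.homAddEquiv (M := ModuleCat.of B (B ⧸ m.map (algebraMap R B)))
        (N := ModuleCat.of B M)).symm.subsingleton
    have h2 : Subsingleton ((R ⧸ m) →ₗ[R] M) := by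
      refine subsingleton_of_forall_eq 0 fun f => ?_
      set z := f 1 with hz
      have hk : ∀ r ∈ m, algebraMap R B r • z = 0 := by
        intro r hr
        rw [algebraMap_smul, hz, ← map_smul]
        have : r • (1 : R ⧸ m) = 0 := by
          rw [Algebra.smul_def, mul_one]
          exact Ideal.Quotient.eq_zero_iff_mem.2 hr
        rw [this, map_zero]
      have hle : m.map (algebraMap R B) ≤ LinearMap.ker (LinearMap.toSpanSingleton B M z) := by
        rw [Ideal.map_le_iff_le_comap]
        intro r hr
        simpa using hk r hr
      let g : (B ⧸ m.map (algebraMap R B)) →ₗ[B] M := Submodule.liftQ _ _ hle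
      have hg : g = 0 := Subsingleton.elim _ _
      have hg1 : g (Submodule.Quotient.mk 1) = z := by
        change LinearMap.toSpanSingleton B M z 1 = z
        simp
      have hz0 : z = 0 := by rw [← hg1, hg]; rfl
      ext
      simpa [hz] using hz0
    obtain ⟨x, hxm, hx⟩ := IsSMulRegular.subsingleton_linearMap_iff.mp h2
    rw [Ideal.annihilator_quotient] at hxm
    have hx' : IsSMulRegular M (algebraMap R B x) := fun a b hab => hx (by
      simpa only [algebraMap_smul] using hab)
    obtain ⟨rs, hl, hm, hr⟩ := ih (QuotSMulTop (algebraMap R B x) M) (by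
      intro i hi
      have zero1 := AddCommGrpCat.isZero_of_iff_subsingleton.mpr (h i (by omega))
      have zero2 := AddCommGrpCat.isZero_of_iff_subsingleton.mpr (h (i + 1) (by omega))
      exact AddCommGrpCat.subsingleton_of_isZero <| ShortComplex.Exact.isZero_of_both_zeros
        ((Ext.covariant_sequence_exact₃' _
          (IsSMulRegular.smulShortComplex_shortExact (M := ModuleCat.of B M) hx')) i (i + 1) rfl)
        (zero1.eq_zero_of_src _) (zero2.eq_zero_of_tgt _))
    refine ⟨x :: rs, by simp [hl], by simpa [hxm] using hm, ?_⟩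
    rw [List.map_cons, isWeaklyRegular_cons_iff]
    exact ⟨hx', hr⟩

/-- depth of regular sequences is bounded by the dimension of the support. -/
theorem length_le_supportDim {R : Type*} [CommRing R] [IsNoetherianRing R] (rs : List R)
    {M : Type*} [AddCommGroup M] [Module R M] [Module.Finite R M] (h : IsRegular M rs) :
    (rs.length : WithBot ℕ∞) ≤ Module.supportDim R M := by
  induction rs generalizing M with
  | nil =>
    have : Nontrivial M := h.nontrivial
    have := (Module.supportDim_ne_bot_iff_nontrivial R M).2 this
    exact Order.krullDim_nonneg_iff.2 (Order.krullDim_ne_bot_iff.1 this)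
  | cons r rs ih =>
    rw [isRegular_cons_iff] at h
    refine le_trans ?_ (Module.supportDim_quotSMulTop_succ_le_of_notMem_minimalPrimes
      (fun p hp => h.1.notMem_of_mem_minimalPrimes hp))
    have := ih h.2
    push_cast [List.length_cons]
    gcongr

end General
section Expo

variable {K : Type} [Field K] {n : ℕ}

noncomputable def scE (s : Fin n → ℕ) (a : Fin n →₀ ℕ) : Fin n →₀ ℕ :=
  Finsupp.equivFunOnFinite.symm fun i => s i * a i

noncomputable def divE (s : Fin n → ℕ) (a : Fin n →₀ ℕ) : Fin n →₀ ℕ :=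
  Finsupp.equivFunOnFinite.symm fun i => a i / s i

noncomputable def modE (s : Fin n → ℕ) (a : Fin n →₀ ℕ) : Fin n →₀ ℕ :=
  Finsupp.equivFunOnFinite.symm fun i => a i % s i

@[simp] theorem scE_apply (s : Fin n → ℕ) (a : Fin n →₀ ℕ) (i : Fin n) :
    scE s a i = s i * a i := rfl

@[simp] theorem divE_apply (s : Fin n → ℕ) (a : Fin n →₀ ℕ) (i : Fin n) :
    divE s a i = a i / s i := rfl

@[simp] theorem modE_apply (s : Fin n → ℕ) (a : Fin n →₀ ℕ) (i : Fin n) :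
    modE s a i = a i % s i := rfl

/-- the map `x_i ↦ x_i ^ s_i` -/
noncomputable def phi (K : Type) [Field K] {n : ℕ} (s : Fin n → ℕ) :
    MvPolynomial (Fin n) K →ₐ[K] MvPolynomial (Fin n) K :=
  aeval fun i => X i ^ s i

theorem phi_monomial (s : Fin n → ℕ) (a : Fin n →₀ ℕ) (c : K) :
    phi K s (monomial a c) = monomial (scE s a) c := by
  rw [phi, aeval_monomial, monomial_eq, algebraMap_eq]
  congr 1
  rw [Finsupp.prod_fintype _ _ (by simp), Finsupp.prod_fintype _ _ (by simp)]
  simp [pow_mul]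

open Classical in
/-- the projection to the summand of residue `r` -/
noncomputable def proj (K : Type) [Field K] {n : ℕ} (s : Fin n → ℕ) (r : Fin n →₀ ℕ) :
    MvPolynomial (Fin n) K →ₗ[K] MvPolynomial (Fin n) K :=
  (basisMonomials (Fin n) K).constr K fun a =>
    if modE s a = r then monomial (divE s a) (1 : K) else 0

open Classical in
theorem proj_monomial (s : Fin n → ℕ) (r : Fin n →₀ ℕ) (a : Fin n →₀ ℕ) :
    proj K s r (monomial a 1) = if modE s a = r then monomial (divE s a) (1 : K) else 0 := by
  have := (basisMonomials (Fin n) K).constr_basis K (fun a =>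
    if modE s a = r then monomial (divE s a) (1 : K) else 0) a
  rwa [coe_basisMonomials] at this

theorem proj_mul (s : Fin n → ℕ) (hs : ∀ i, 0 < s i) (r : Fin n →₀ ℕ)
    (p q : MvPolynomial (Fin n) K) :
    proj K s r (phi K s p * q) = p * proj K s r q := by
  classical
  have key : ∀ c a : Fin n →₀ ℕ, proj K s r (phi K s (monomial c 1) * monomial a 1) =
      monomial c 1 * proj K s r (monomial a 1) := by
    intro c a
    have h1 : modE s (scE s c + a) = modE s a := by
      ext i; simp
    have h2 : divE s (scE s c + a) = c + divE s a := by
      ext i; simp [Nat.add_div_of_dvd_right, Nat.mul_div_cancel_left _ (hs i)]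
    rw [phi_monomial, monomial_mul, one_mul, proj_monomial, proj_monomial, h1, h2]
    split_ifs <;> simp [monomial_mul]
  have mon : ∀ (c : Fin n →₀ ℕ) (k : K), monomial c k = k • monomial c (1 : K) := by
    intro c k; simp [smul_monomial]
  induction p using MvPolynomial.induction_on' with
  | monomial c k =>
    induction q using MvPolynomial.induction_on' with
    | monomial a l =>
      rw [mon c k, mon a l]
      simp only [map_smul, smul_mul_assoc, mul_smul_comm, key]
    | add q1 q2 h1 h2 => simp only [mul_add, map_add, h1, h2]
  | add p1 p2 h1 h2 => simp only [add_mul, map_add, h1, h2]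

/-- A copy of the polynomial ring, viewed as algebra through `phi K s`. -/
def ExpR (K : Type) [Field K] {n : ℕ} (_s : Fin n → ℕ) : Type := MvPolynomial (Fin n) K

noncomputable instance (s : Fin n → ℕ) : CommRing (ExpR K s) :=
  inferInstanceAs (CommRing (MvPolynomial (Fin n) K))

noncomputable instance (s : Fin n → ℕ) : Algebra (MvPolynomial (Fin n) K) (ExpR K s) :=
  RingHom.toAlgebra (R := MvPolynomial (Fin n) K) (S := ExpR K s) (phi K s).toRingHom

/-- the identity map to the copy -/
noncomputable def toE (K : Type) [Field K] {n : ℕ} (s : Fin n → ℕ) :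
    MvPolynomial (Fin n) K ≃+* ExpR K s := RingEquiv.refl (MvPolynomial (Fin n) K)

theorem toE_smul (s : Fin n → ℕ) (p q : MvPolynomial (Fin n) K) :
    p • toE K s q = toE K s (phi K s p * q) := rfl

theorem algebraMap_toE (s : Fin n → ℕ) (p : MvPolynomial (Fin n) K) :
    algebraMap _ (ExpR K s) p = toE K s (phi K s p) := rfl

noncomputable def boxE (s : Fin n → ℕ) (r : (i : Fin n) → Fin (s i)) : Fin n →₀ ℕ :=
  Finsupp.equivFunOnFinite.symm fun i => (r i : ℕ)

@[simp] theorem boxE_apply (s : Fin n → ℕ) (r : (i : Fin n) → Fin (s i)) (i : Fin n) :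
    boxE s r i = r i := rfl

noncomputable def projL (K : Type) [Field K] {n : ℕ} (s : Fin n → ℕ) (hs : ∀ i, 0 < s i)
    (r : Fin n →₀ ℕ) : ExpR K s →ₗ[MvPolynomial (Fin n) K] MvPolynomial (Fin n) K where
  toFun q := proj K s r ((toE K s).symm q)
  map_add' _ _ := map_add (proj K s r) _ _
  map_smul' p q := proj_mul s hs r p ((toE K s).symm q)

theorem projL_toE (s : Fin n → ℕ) (hs : ∀ i, 0 < s i) (r : Fin n →₀ ℕ)
    (q : MvPolynomial (Fin n) K) : projL K s hs r (toE K s q) = proj K s r q := rfl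

noncomputable def expBasis (K : Type) [Field K] {n : ℕ} (s : Fin n → ℕ) (hs : ∀ i, 0 < s i) :
    Module.Basis ((i : Fin n) → Fin (s i)) (MvPolynomial (Fin n) K) (ExpR K s) :=
  Module.Basis.mk (v := fun r => toE K s (monomial (boxE s r) (1 : K))) (by
    classical
    rw [Fintype.linearIndependent_iff]
    intro g hg r
    have h := congrArg (projL K s hs (boxE s r)) hg
    rw [map_sum, map_zero, Finset.sum_eq_single r] at h
    · rw [map_smul, projL_toE, proj_monomial] at h
      have h3 : modE s (boxE s r) = boxE s r := by
        ext i; simp [Nat.mod_eq_of_lt]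
      have h4 : divE s (boxE s r) = 0 := by
        ext i; simp [Nat.div_eq_of_lt]
      rw [if_pos h3, h4] at h
      simpa using h
    · intro r' _ hr'
      rw [map_smul, projL_toE, proj_monomial, if_neg, smul_zero]
      intro hh
      apply hr'
      funext i
      have := DFunLike.congr_fun hh i
      simp only [modE_apply, boxE_apply, Nat.mod_eq_of_lt (r' i).2] at this
      exact Fin.ext this
    · simp) (by
    intro q _
    obtain ⟨q, rfl⟩ := (toE K s).surjective q
    induction q using MvPolynomial.induction_on' with
    | monomial a l =>
      have h : toE K s (monomial a l) =
          (monomial (divE s a) l : MvPolynomial (Fin n) K) • toE K s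
            (monomial (boxE s fun i => ⟨a i % s i, Nat.mod_lt _ (hs i)⟩) (1 : K)) := by
        have e : scE s (divE s a) + boxE s (fun i => ⟨a i % s i, Nat.mod_lt _ (hs i)⟩) = a := by
          refine Finsupp.ext fun i => ?_
          simp [Nat.div_add_mod]
        rw [toE_smul, phi_monomial, monomial_mul, mul_one, e]
      rw [h]
      exact Submodule.smul_mem _ _ (Submodule.subset_span ⟨_, rfl⟩)
    | add p q hp hq =>
      rw [map_add]
      exact Submodule.add_mem _ (hp trivial) (hq trivial))

end Expo
section Depth

open RingTheory.Sequence CategoryTheory Abelian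

variable {K : Type} [Field K] {n : ℕ}

def HasReg (K : Type) [Field K] (n : ℕ) (I : Ideal (MvPolynomial (Fin n) K)) (d : ℕ) : Prop :=
  ∃ rs : List (MvPolynomial (Fin n) K), rs.length = d ∧ (∀ r ∈ rs, r ∈ mIdeal K n) ∧
    IsRegular (MvPolynomial (Fin n) K ⧸ I) rs

theorem mem_mIdeal (p : MvPolynomial (Fin n) K) : p ∈ mIdeal K n ↔ ∀ a ∈ p.support, a ≠ 0 := by
  rw [mIdeal, ← Set.image_univ, mem_ideal_span_X_image]
  simp [Finsupp.ne_iff]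

theorem mIdeal_ne_top : mIdeal K n ≠ ⊤ := by
  rw [Ideal.ne_top_iff_one, mem_mIdeal]
  intro h
  refine h 0 ?_ rfl
  simp

theorem mem_monIdeal {q : ℕ} (v : Fin q → Fin n →₀ ℕ) (p : MvPolynomial (Fin n) K) :
    p ∈ monIdeal K v ↔ ∀ a ∈ p.support, ∃ j, v j ≤ a := by
  rw [monIdeal, Set.range_comp' (fun a => monomial a (1 : K)) v, mem_ideal_span_monomial_image]
  simp

theorem monIdeal_le {q : ℕ} (v : Fin q → Fin n →₀ ℕ) (h : ∀ j, v j ≠ 0) :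
    monIdeal K v ≤ mIdeal K n := by
  intro p hp
  rw [mem_mIdeal]
  rw [mem_monIdeal] at hp
  rintro a ha rfl
  obtain ⟨j, hj⟩ := hp 0 ha
  exact h j (by simpa using hj)

theorem smul_top_ne {R : Type*} [CommRing R] {m I : Ideal R} (hm : m ≠ ⊤) (hI : I ≤ m) :
    m • (⊤ : Submodule R (R ⧸ I)) < ⊤ := by
  rw [lt_top_iff_ne_top]
  intro h
  have h1 : (⊤ : Submodule R (R ⧸ I)) = Submodule.map I.mkQ ⊤ := by
    rw [Submodule.map_top, Submodule.range_mkQ]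
  have h2 : Submodule.map I.mkQ m = ⊤ := by
    rw [← h, h1, ← Submodule.map_smul'']
    simp
  have h3 := congrArg (Submodule.comap I.mkQ) h2
  rw [Submodule.comap_map_mkQ, Submodule.comap_top, sup_eq_right.2 hI] at h3
  exact hm h3

theorem isRegular_of_weak {R : Type*} [CommRing R] {m I : Ideal R} (hm : m ≠ ⊤) (hI : I ≤ m)
    (rs : List R) (hr : ∀ r ∈ rs, r ∈ m) (h : IsWeaklyRegular (R ⧸ I) rs) :
    IsRegular (R ⧸ I) rs := by
  refine ⟨h, fun h1 => (smul_top_ne hm hI).ne (top_le_iff.1 ?_)⟩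
  refine h1.le.trans (Submodule.smul_mono_left ?_)
  rw [Ideal.ofList, Ideal.span_le]
  exact hr

theorem phi_mIdeal (s : Fin n → ℕ) (hs : ∀ i, 0 < s i) :
    (mIdeal K n).map (phi K s) ≤ mIdeal K n := by
  conv_lhs => rw [mIdeal]
  rw [Ideal.map_span, Ideal.span_le]
  rintro _ ⟨_, ⟨i, rfl⟩, rfl⟩
  simp only [phi, aeval_X]
  exact Ideal.pow_mem_of_mem _ (show X i ∈ mIdeal K n from Ideal.subset_span ⟨i, rfl⟩) _ (hs i)

theorem phi_monIdeal (s : Fin n → ℕ) {q : ℕ} (v : Fin q → Fin n →₀ ℕ) :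
    (monIdeal K v).map (phi K s) = monIdeal K (fun j => scE s (v j)) := by
  rw [monIdeal, Ideal.map_span, monIdeal, ← Set.range_comp]
  congr 2
  funext j
  simp [phi_monomial]

/-- transfer between the copy and the ring itself -/
theorem weak_toE (s : Fin n → ℕ) (J : Ideal (MvPolynomial (Fin n) K))
    (rs : List (MvPolynomial (Fin n) K)) :
    IsWeaklyRegular (ExpR K s ⧸ J.map (toE K s)) (rs.map (toE K s)) ↔
      IsWeaklyRegular (MvPolynomial (Fin n) K ⧸ J) rs := by
  have h : J.map (toE K s) = (show Ideal (ExpR K s) from J) := Ideal.map_id J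
  have h' : rs.map (toE K s) = (show List (ExpR K s) from rs) := List.map_id rs
  rw [h, h']
  exact Iff.rfl

theorem map_phi_toE (s : Fin n → ℕ) (I : Ideal (MvPolynomial (Fin n) K)) :
    (I.map (phi K s)).map (toE K s) = I.map (algebraMap _ (ExpR K s)) :=
  Ideal.map_map (phi K s).toRingHom (toE K s).toRingHom

theorem flat_aux (s : Fin n → ℕ) (hs : ∀ i, 0 < s i) (I : Ideal (MvPolynomial (Fin n) K))
    (rs : List (MvPolynomial (Fin n) K))
    (hr : IsWeaklyRegular (MvPolynomial (Fin n) K ⧸ I) rs) :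
    IsWeaklyRegular (ExpR K s ⧸ I.map (algebraMap _ (ExpR K s)))
      (rs.map (algebraMap _ (ExpR K s))) := by
  have : Module.Free (MvPolynomial (Fin n) K) (ExpR K s) := Module.Free.of_basis (expBasis K s hs)
  have h1 := IsWeaklyRegular.of_flat_of_isBaseChange
    (TensorProduct.isBaseChange (MvPolynomial (Fin n) K) (MvPolynomial (Fin n) K ⧸ I) (ExpR K s))
    hr
  exact ((Algebra.TensorProduct.quotIdealMapEquivTensorQuot
    (ExpR K s) I).toLinearEquiv.isWeaklyRegular_congr _).2 h1

theorem hasReg_phi (s : Fin n → ℕ) (hs : ∀ i, 0 < s i) (I : Ideal (MvPolynomial (Fin n) K))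
    (hI : I.map (phi K s) ≤ mIdeal K n) (d : ℕ) (h : HasReg K n I d) :
    HasReg K n (I.map (phi K s)) d := by
  obtain ⟨rs, hl, hm, hr⟩ := h
  have hm' : ∀ r ∈ rs.map (phi K s), r ∈ mIdeal K n := by
    intro r hr
    obtain ⟨p, hp, rfl⟩ := List.mem_map.1 hr
    exact phi_mIdeal s hs (Ideal.mem_map_of_mem _ (hm p hp))
  refine ⟨rs.map (phi K s), by simpa using hl, hm', isRegular_of_weak mIdeal_ne_top hI _ hm' ?_⟩
  rw [← weak_toE s]
  have e2 : (rs.map (phi K s)).map (toE K s) = rs.map (algebraMap _ (ExpR K s)) := by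
    rw [List.map_map]; rfl
  rw [map_phi_toE, e2]
  exact flat_aux s hs I rs hr.1

end Depth
section A2

open RingTheory.Sequence CategoryTheory Abelian

theorem descend_reg {R B : Type} [CommRing R] [CommRing B] [IsNoetherianRing R] [Algebra R B]
    [Module.Finite R B] (m : Ideal R) (n J : Ideal B)
    (hrad : n ≤ (m.map (algebraMap R B)).radical) (hn : n ≠ ⊤) (hJ : J ≤ n) (rs : List B)
    (hrs : ∀ r ∈ rs, r ∈ n) (h : IsWeaklyRegular (B ⧸ J) rs) :
    ∃ rs' : List R, rs'.length = rs.length ∧ (∀ r ∈ rs', r ∈ m) ∧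
      IsWeaklyRegular (B ⧸ J) (rs'.map (algebraMap R B)) := by
  have : IsNoetherianRing B := IsNoetherianRing.of_finite R B
  refine descend m rs.length (B ⧸ J) ?_
  refine ModuleCat.subsingleton_ext_of_exists_isRegular n
    (ModuleCat.of B (B ⧸ m.map (algebraMap R B))) ?_ (ModuleCat.of B (B ⧸ J))
    (smul_top_ne hn hJ) rs hrs (isRegular_of_weak hn hJ rs hrs h)
  rw [Module.support_eq_zeroLocus, PrimeSpectrum.zeroLocus_subset_zeroLocus_iff]
  refine hrad.trans ?_
  rw [show Module.annihilator B (ModuleCat.of B (B ⧸ m.map (algebraMap R B))) =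
    m.map (algebraMap R B) from Ideal.annihilator_quotient]

variable {K : Type} [Field K] {n : ℕ}

theorem rad_aux (s : Fin n → ℕ) :
    (mIdeal K n).map (toE K s) ≤
      ((mIdeal K n).map (algebraMap (MvPolynomial (Fin n) K) (ExpR K s))).radical := by
  conv_lhs => rw [mIdeal]
  rw [Ideal.map_span, Ideal.span_le]
  rintro _ ⟨_, ⟨i, rfl⟩, rfl⟩
  refine ⟨s i, ?_⟩
  have : toE K s (X i) ^ s i = algebraMap (MvPolynomial (Fin n) K) (ExpR K s) (X i) := by
    rw [algebraMap_toE, ← map_pow]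
    simp [phi]
  rw [this]
  exact Ideal.mem_map_of_mem _ (Ideal.subset_span ⟨i, rfl⟩)

theorem map_toE_ne_top (s : Fin n → ℕ) : (mIdeal K n).map (toE K s) ≠ ⊤ := by
  intro h
  apply mIdeal_ne_top (K := K) (n := n)
  have := Ideal.comap_map_of_bijective (toE K s) (toE K s).bijective (I := mIdeal K n)
  rw [← this, h, Ideal.comap_top]

theorem descend_toE (s : Fin n → ℕ) (hs : ∀ i, 0 < s i) (J : Ideal (MvPolynomial (Fin n) K))
    (hJ : J ≤ mIdeal K n) (d : ℕ) (h : HasReg K n J d) :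
    ∃ rs : List (MvPolynomial (Fin n) K), rs.length = d ∧ (∀ r ∈ rs, r ∈ mIdeal K n) ∧
      IsWeaklyRegular (ExpR K s ⧸ J.map (toE K s)) rs := by
  obtain ⟨rs, hl, hm, hr⟩ := h
  have : Module.Finite (MvPolynomial (Fin n) K) (ExpR K s) := Module.Finite.of_basis (expBasis K s hs)
  obtain ⟨rs', h1, h2, h3⟩ := descend_reg (mIdeal K n) ((mIdeal K n).map (toE K s))
    (J.map (toE K s)) (rad_aux s) (map_toE_ne_top s) (Ideal.map_mono hJ) (rs.map (toE K s)) (by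
      intro r hr
      obtain ⟨p, hp, rfl⟩ := List.mem_map.1 hr
      exact Ideal.mem_map_of_mem _ (hm p hp)) ((weak_toE s J rs).2 hr.1)
  refine ⟨rs', by simpa [hl] using h1, h2, ?_⟩
  exact (isWeaklyRegular_map_algebraMap_iff (ExpR K s) _ rs').1 h3

theorem hasReg_descend {q q' : ℕ} (s : Fin n → ℕ) (hs : ∀ i, 0 < s i) (r : Fin n →₀ ℕ)
    (hr : ∀ i, r i < s i) (u : Fin q → Fin n →₀ ℕ) (w : Fin q' → Fin n →₀ ℕ)
    (hu : ∀ j, u j ≠ 0) (hw : ∀ j, w j ≠ 0)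
    (h : ∀ b, (∃ j, w j ≤ b) ↔ ∃ j, u j ≤ r + scE s b) (d : ℕ)
    (hd : HasReg K n (monIdeal K u) d) : HasReg K n (monIdeal K w) d := by
  obtain ⟨rs, hl, hm, hreg⟩ := descend_toE s hs _ (monIdeal_le u hu) d hd
  refine ⟨rs, hl, hm, isRegular_of_weak mIdeal_ne_top (monIdeal_le w hw) rs hm ?_⟩
  let i0 : MvPolynomial (Fin n) K →ₗ[MvPolynomial (Fin n) K]
      (ExpR K s ⧸ (monIdeal K u).map (toE K s)) :=
    LinearMap.toSpanSingleton _ _ (Ideal.Quotient.mk _ (toE K s (monomial r 1)))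
  have hi0 : ∀ p, i0 p = Ideal.Quotient.mk _ (toE K s (phi K s p * monomial r 1)) := by
    intro p
    rw [← toE_smul]
    rfl
  have hker : monIdeal K w ≤ LinearMap.ker i0 := by
    conv_lhs => rw [monIdeal]
    rw [Ideal.span_le]
    rintro _ ⟨j, rfl⟩
    rw [SetLike.mem_coe, LinearMap.mem_ker, hi0, Ideal.Quotient.eq_zero_iff_mem]
    refine Ideal.mem_map_of_mem _ ?_
    rw [phi_monomial, monomial_mul, mem_monIdeal]
    intro a ha
    have := support_monomial_subset ha
    rw [Finset.mem_singleton] at this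
    subst this
    rw [add_comm]
    exact (h _).1 ⟨j, le_rfl⟩
  let P := projL K s hs r
  have hP : ∀ x ∈ (monIdeal K u).map (toE K s), P x ∈ monIdeal K w := by
    intro x hx
    obtain ⟨p, hp, rfl⟩ := (Ideal.mem_map_of_equiv (toE K s) x).1 hx
    rw [mem_monIdeal] at hp
    change projL K s hs r (toE K s p) ∈ _
    rw [projL_toE, p.as_sum, map_sum]
    refine sum_mem fun a ha => ?_
    have e : monomial a (coeff a p) = (coeff a p) • monomial a (1 : K) := by
      rw [smul_monomial, smul_eq_mul, mul_one]
    rw [e, map_smul, proj_monomial]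
    split_ifs with hra
    · rw [smul_monomial, mem_monIdeal]
      intro b hb
      have := support_monomial_subset hb
      rw [Finset.mem_singleton] at this
      subst this
      rw [h]
      obtain ⟨j, hj⟩ := hp a ha
      refine ⟨j, hj.trans (le_of_eq ?_)⟩
      ext i
      have := DFunLike.congr_fun hra i
      simp at this ⊢
      rw [← this, Nat.mod_add_div]
    · simp
  have hP' : (((monIdeal K u).map (toE K s)).restrictScalars (MvPolynomial (Fin n) K)) ≤
      LinearMap.ker ((monIdeal K w).mkQ ∘ₗ P) := by
    intro x hx
    rw [LinearMap.mem_ker, LinearMap.comp_apply, Submodule.mkQ_apply,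
      Submodule.Quotient.mk_eq_zero]
    exact hP x hx
  let i1 : (MvPolynomial (Fin n) K ⧸ monIdeal K w) →ₗ[MvPolynomial (Fin n) K]
      (ExpR K s ⧸ (monIdeal K u).map (toE K s)) := Submodule.liftQ _ i0 hker
  let p1 : (ExpR K s ⧸ ((monIdeal K u).map (toE K s)).restrictScalars (MvPolynomial (Fin n) K))
      →ₗ[MvPolynomial (Fin n) K]
      (MvPolynomial (Fin n) K ⧸ monIdeal K w) := Submodule.liftQ _ ((monIdeal K w).mkQ ∘ₗ P) hP'
  let e := Submodule.Quotient.restrictScalarsEquiv (MvPolynomial (Fin n) K)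
    ((monIdeal K u).map (toE K s))
  refine weaklyReg_retract rs i1 (p1 ∘ₗ e.symm.toLinearMap) ?_ hreg
  intro x
  obtain ⟨p, rfl⟩ := Submodule.Quotient.mk_surjective _ x
  have e1 : i1 (Submodule.Quotient.mk p) = i0 p := rfl
  rw [e1, hi0]
  have e2 : (p1 ∘ₗ e.symm.toLinearMap) (Ideal.Quotient.mk _
      (toE K s (phi K s p * monomial r 1))) =
      Submodule.Quotient.mk (projL K s hs r (toE K s (phi K s p * monomial r 1))) := rfl
  rw [e2, projL_toE, proj_mul s hs, proj_monomial, if_pos, show divE s r = 0 from ?_]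
  · rw [show (monomial 0 (1:K) : MvPolynomial (Fin n) K) = 1 from rfl, mul_one]
  · ext i; simpa using Or.inr (hr i)
  · ext i; simpa using Nat.mod_eq_of_lt (hr i)

/-- combination -/
theorem lemmaA {q : ℕ} (v w : Fin q → Fin n →₀ ℕ) (N s r : Fin n → ℕ) (hN : ∀ i, 0 < N i)
    (hs : ∀ i, r i < s i) (hv : ∀ j, v j ≠ 0) (hw : ∀ j, w j ≠ 0)
    (h : ∀ j i t, w j i ≤ t ↔ N i * v j i ≤ r i + s i * t) (d : ℕ)
    (hd : HasReg K n (monIdeal K v) d) : HasReg K n (monIdeal K w) d := by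
  have h0 : ∀ j, scE N (v j) ≠ 0 := by
    intro j hj
    apply hv j
    ext i
    have := DFunLike.congr_fun hj i
    simp at this
    simpa [(hN i).ne'] using this
  have h1 : HasReg K n (monIdeal K fun j => scE N (v j)) d := by
    rw [← phi_monIdeal]
    refine hasReg_phi N hN _ ?_ d hd
    rw [phi_monIdeal]
    exact monIdeal_le _ h0
  refine hasReg_descend s (fun i => (Nat.zero_le _).trans_lt (hs i))
    (Finsupp.equivFunOnFinite.symm r) hs _ w h0 hw ?_ d h1
  intro b
  refine exists_congr fun j => ?_
  rw [Finsupp.le_def, Finsupp.le_def]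
  refine forall_congr' fun i => ?_
  simpa using h j i (b i)

end A2
section TZero

open RingTheory.Sequence CategoryTheory Abelian
open scoped Pointwise

theorem ext_mid {R : Type} [CommRing R] (N : ModuleCat.{0} R) (x : R) (I J : Ideal R)
    (h1 : ∀ p, x * p ∈ I ↔ p ∈ J) (h2 : I ≤ (x • (⊤ : Submodule R R))) (k : ℕ)
    (hA : Subsingleton (Ext N (ModuleCat.of R (R ⧸ J)) k))
    (hC : Subsingleton (Ext N (ModuleCat.of R (R ⧸ (x • (⊤ : Submodule R R)))) k)) :
    Subsingleton (Ext N (ModuleCat.of R (R ⧸ I)) k) := by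
  let f : (R ⧸ J) →ₗ[R] (R ⧸ I) := Submodule.mapQ J I (LinearMap.lsmul R R x)
    (fun p hp => (h1 p).2 hp)
  let g : (R ⧸ I) →ₗ[R] (R ⧸ (x • (⊤ : Submodule R R))) := Submodule.factor h2
  have hex : Function.Exact f g := by
    intro y
    obtain ⟨y, rfl⟩ := Submodule.Quotient.mk_surjective _ y
    have e : g (Submodule.Quotient.mk y) = Submodule.Quotient.mk y := rfl
    rw [e, Submodule.Quotient.mk_eq_zero]
    constructor
    · intro hy
      obtain ⟨p, -, hp⟩ := Submodule.mem_smul_pointwise_iff_exists _ _ _ |>.1 hy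
      refine ⟨Submodule.Quotient.mk p, ?_⟩
      rw [← hp]
      rfl
    · rintro ⟨p, hp⟩
      obtain ⟨p, rfl⟩ := Submodule.Quotient.mk_surjective _ p
      have e2 : f (Submodule.Quotient.mk p) = Submodule.Quotient.mk (x * p) := rfl
      rw [e2, Submodule.Quotient.eq] at hp
      have h3 := h2 hp
      have h4 : x * p ∈ (x • (⊤ : Submodule R R)) :=
        Submodule.smul_mem_pointwise_smul p x ⊤ trivial
      have := sub_mem h4 h3
      rwa [sub_sub_cancel] at this
  have hinj : Function.Injective f := by
    rw [← LinearMap.ker_eq_bot, LinearMap.ker_eq_bot']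
    intro p hp
    obtain ⟨p, rfl⟩ := Submodule.Quotient.mk_surjective _ p
    have e2 : f (Submodule.Quotient.mk p) = Submodule.Quotient.mk (x * p) := rfl
    rw [e2, Submodule.Quotient.mk_eq_zero, h1] at hp
    exact (Submodule.Quotient.mk_eq_zero _).2 hp
  have hsurj : Function.Surjective g := Submodule.factor_surjective h2
  have hS := ModuleCat.shortComplex_shortExact
    (ModuleCat.shortComplexOfCompEqZero f g hex.linearMap_comp_eq_zero) hex hinj hsurj
  have zero1 := AddCommGrpCat.isZero_of_iff_subsingleton.mpr hA
  have zero2 := AddCommGrpCat.isZero_of_iff_subsingleton.mpr hC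
  exact AddCommGrpCat.subsingleton_of_isZero <| ShortComplex.Exact.isZero_of_both_zeros
    (Ext.covariant_sequence_exact₂' N hS k)
    (zero1.eq_zero_of_src _) (zero2.eq_zero_of_tgt _)

variable {K : Type} [Field K] {n : ℕ}

theorem weak_X (l : List (Fin n)) (hl : l.Nodup) :
    IsWeaklyRegular (MvPolynomial (Fin n) K) (l.map (X : Fin n → MvPolynomial (Fin n) K)) := by
  rw [isWeaklyRegular_iff]
  intro k hk
  have hk' : k < l.length := by simpa using hk
  have e : (Ideal.ofList ((l.map (X : Fin n → MvPolynomial (Fin n) K)).take k) • ⊤ :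
      Submodule (MvPolynomial (Fin n) K) (MvPolynomial (Fin n) K)) =
      Ideal.span (X '' {a | a ∈ l.take k}) := by
    rw [smul_eq_mul, Ideal.mul_top, Ideal.ofList, ← List.map_take]
    congr 1
    ext p
    simp only [Set.mem_ofPred_eq, List.mem_map, Set.mem_image]
  rw [e, List.getElem_map]
  have hnot : l[k] ∉ l.take k := by
    intro h
    obtain ⟨j, hj, hj'⟩ := List.mem_take_iff_getElem.1 h
    have := (hl.getElem_inj_iff).1 hj'
    omega
  rw [isSMulRegular_iff_right_eq_zero_of_smul]
  intro p hp
  obtain ⟨p, rfl⟩ := Submodule.Quotient.mk_surjective _ p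
  rw [← Submodule.Quotient.mk_smul, Submodule.Quotient.mk_eq_zero, smul_eq_mul] at hp
  rw [Submodule.Quotient.mk_eq_zero]
  rw [mem_ideal_span_X_image] at hp ⊢
  intro a ha
  obtain ⟨i, hi, h⟩ := hp (Finsupp.single l[k] 1 + a) (by
    rw [mem_support_iff, coeff_X_mul]
    exact mem_support_iff.1 ha)
  refine ⟨i, hi, ?_⟩
  have : l[k] ≠ i := by rintro rfl; exact hnot hi
  simpa [Finsupp.single_apply, this] using h

theorem hasReg_le {q : ℕ} (v : Fin q → Fin n →₀ ℕ) (j : Fin q) (d : ℕ)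
    (h : HasReg K n (monIdeal K v) d) : d + 1 ≤ n := by
  obtain ⟨rs, rfl, -, hr⟩ := h
  have h1 := length_le_supportDim rs hr
  rw [Module.supportDim_quotient_eq_ringKrullDim] at h1
  have h2 := ringKrullDim_succ_le_of_surjective (Ideal.Quotient.mk (monIdeal K v))
    Ideal.Quotient.mk_surjective (r := monomial (v j) 1)
    (mem_nonZeroDivisors_of_ne_zero (by simp))
    (Ideal.Quotient.eq_zero_iff_mem.2 (Ideal.subset_span ⟨j, rfl⟩))
  have h3 : ringKrullDim (MvPolynomial (Fin n) K) = n := by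
    rw [MvPolynomial.ringKrullDim_of_isNoetherianRing, ringKrullDim_eq_zero_of_field]
    simp
  rw [h3] at h2
  have h4 : ((rs.length + 1 : ℕ) : WithBot ℕ∞) ≤ (n : ℕ) := by
    push_cast
    refine le_trans ?_ h2
    gcongr
  exact_mod_cast h4

theorem hasReg_mul_X {q : ℕ} (v v' : Fin q → Fin n →₀ ℕ) (i : Fin n) (j0 : Fin q)
    (h : ∀ j, v j = Finsupp.single i 1 + v' j) (hv' : ∀ j, v' j ≠ 0) (d : ℕ)
    (hd : HasReg K n (monIdeal K v') d) : HasReg K n (monIdeal K v) d := by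
  have hdn := hasReg_le v' j0 d hd
  obtain ⟨rs, hl, hm, hr⟩ := hd
  have hv : ∀ j, v j ≠ 0 := fun j hj => hv' j (by
    rw [h] at hj
    exact (add_eq_zero.1 hj).2)
  have hsupp : Module.support (MvPolynomial (Fin n) K)
      (ModuleCat.of (MvPolynomial (Fin n) K) (MvPolynomial (Fin n) K ⧸ mIdeal K n)) =
      PrimeSpectrum.zeroLocus (mIdeal K n) := by
    rw [Module.support_eq_zeroLocus]
    rw [show Module.annihilator (MvPolynomial (Fin n) K)
      (ModuleCat.of (MvPolynomial (Fin n) K) (MvPolynomial (Fin n) K ⧸ mIdeal K n)) =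
      mIdeal K n from Ideal.annihilator_quotient]
  refine ModuleCat.exists_isRegular_of_exists_subsingleton_ext (mIdeal K n) d
    (ModuleCat.of _ (MvPolynomial (Fin n) K ⧸ monIdeal K v))
    (smul_top_ne mIdeal_ne_top (monIdeal_le v hv))
    (ModuleCat.of _ (MvPolynomial (Fin n) K ⧸ mIdeal K n)) hsupp ?_
  intro k hk
  refine ext_mid _ (X i) _ (monIdeal K v') ?_ ?_ k ?_ ?_
  · intro p
    rw [mem_monIdeal, mem_monIdeal]
    constructor
    · intro hp a ha
      obtain ⟨j, hj⟩ := hp (Finsupp.single i 1 + a) (by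
        rw [mem_support_iff, coeff_X_mul]
        exact mem_support_iff.1 ha)
      rw [h] at hj
      exact ⟨j, by simpa using hj⟩
    · intro hp a ha
      rw [support_X_mul, Finset.mem_map] at ha
      obtain ⟨b, hb, rfl⟩ := ha
      obtain ⟨j, hj⟩ := hp b hb
      exact ⟨j, by rw [h]; simpa using hj⟩
  · rw [monIdeal, Ideal.span_le]
    rintro _ ⟨j, rfl⟩
    refine (Submodule.mem_smul_pointwise_iff_exists _ _ _).2 ⟨monomial (v' j) 1, trivial, ?_⟩
    dsimp only
    rw [h, smul_eq_mul, X, monomial_mul, one_mul]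
  · rw [← hl] at hk
    exact ModuleCat.subsingleton_ext_of_exists_isRegular (mIdeal K n)
      (ModuleCat.of _ (MvPolynomial (Fin n) K ⧸ mIdeal K n)) hsupp.le
      (ModuleCat.of _ (MvPolynomial (Fin n) K ⧸ monIdeal K v'))
      (smul_top_ne mIdeal_ne_top (monIdeal_le v' hv')) rs hm hr k hk
  · have hle : ((X i : MvPolynomial (Fin n) K) • (⊤ : Submodule (MvPolynomial (Fin n) K)
        (MvPolynomial (Fin n) K))) ≤ mIdeal K n := by
      intro p hp
      obtain ⟨p, -, rfl⟩ := (Submodule.mem_smul_pointwise_iff_exists _ _ _).1 hp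
      exact Ideal.mul_mem_right _ _ (Ideal.subset_span ⟨i, rfl⟩)
    let l : List (Fin n) := (Finset.univ.erase i).toList
    have hll : l.length = n - 1 := by simp [l]
    have hw := weak_X (K := K) (i :: l) (by
      rw [List.nodup_cons]
      exact ⟨by simp [l], Finset.nodup_toList _⟩)
    rw [List.map_cons, isWeaklyRegular_cons_iff] at hw
    have hlm : ∀ r ∈ l.map (X : Fin n → MvPolynomial (Fin n) K), r ∈ mIdeal K n := by
      intro r hr
      obtain ⟨a, -, rfl⟩ := List.mem_map.1 hr
      exact Ideal.subset_span ⟨a, rfl⟩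
    exact ModuleCat.subsingleton_ext_of_exists_isRegular (mIdeal K n)
      (ModuleCat.of _ (MvPolynomial (Fin n) K ⧸ mIdeal K n)) hsupp.le
      (ModuleCat.of _ (MvPolynomial (Fin n) K ⧸ ((X i : MvPolynomial (Fin n) K) •
        (⊤ : Submodule (MvPolynomial (Fin n) K) (MvPolynomial (Fin n) K)))))
      (smul_top_ne mIdeal_ne_top hle) _ hlm (isRegular_of_weak mIdeal_ne_top hle _ hlm hw.2)
      k (by rw [List.length_map, hll]; omega)

end TZero
section Comb

variable {K : Type} [Field K] {n q : ℕ}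

noncomputable def gapE (i : Fin n) (t : ℕ) (a : Fin n →₀ ℕ) : Fin n →₀ ℕ :=
  Finsupp.equivFunOnFinite.symm fun k => if k = i ∧ t < a k then a k - 1 else a k

theorem gapE_apply (i : Fin n) (t : ℕ) (a : Fin n →₀ ℕ) (k : Fin n) :
    gapE i t a k = if k = i ∧ t < a k then a k - 1 else a k := rfl

theorem gapE_le_iff (i : Fin n) (t : ℕ) (a b : Fin n →₀ ℕ) (ha : a i ≠ t) (hb : b i ≠ t)
    (k : Fin n) : gapE i t a k ≤ gapE i t b k ↔ a k ≤ b k := by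
  rw [gapE_apply, gapE_apply]
  by_cases hk : k = i
  · subst hk
    simp only [true_and]
    split_ifs <;> omega
  · simp [hk]

theorem antichain_gap (v : Fin q → Fin n →₀ ℕ) (hv : AntichainFam v) (i : Fin n) (t : ℕ)
    (ht : ∀ j, v j i ≠ t) : AntichainFam fun j => gapE i t (v j) := by
  intro j k h
  refine hv j k fun l => ?_
  exact (gapE_le_iff i t _ _ (ht j) (ht k) l).1 (h l)

theorem antichain_ne_zero (v : Fin q → Fin n →₀ ℕ) (hv : AntichainFam v) (j0 j1 : Fin q)
    (hj : j0 ≠ j1) (j : Fin q) : v j ≠ 0 := by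
  intro h
  have h0 := hv j j0 (by rw [h]; exact zero_le)
  have h1 := hv j j1 (by rw [h]; exact zero_le)
  exact hj (h0.symm.trans h1)

theorem arith_fwd (N t v τ : ℕ) (hv : v ≠ t) (hN : v ≤ N) (ht : t ≤ N) :
    (if t < v then v - 1 else v) ≤ τ ↔ N * v ≤ (N - t) + (N + 1) * τ := by
  obtain ⟨c, rfl⟩ := Nat.exists_eq_add_of_le ht
  rw [Nat.add_sub_cancel_left]
  split_ifs with h
  · obtain ⟨u, rfl⟩ : ∃ u, v = u + 1 := ⟨v - 1, by omega⟩
    rw [Nat.add_sub_cancel]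
    constructor
    · intro hu
      nlinarith
    · intro hu
      by_contra hlt
      obtain ⟨e, rfl⟩ : ∃ e, u = τ + 1 + e := ⟨u - τ - 1, by omega⟩
      nlinarith
  · constructor
    · intro hu
      nlinarith
    · intro hu
      by_contra hlt
      obtain ⟨e, rfl⟩ : ∃ e, v = τ + 1 + e := ⟨v - τ - 1, by omega⟩
      nlinarith

theorem arith_bwd (M t v τ : ℕ) (hv : v ≠ t + 1) (hN : v ≤ M) (ht : t + 1 ≤ M) :
    v ≤ τ ↔ (M + 1) * (if t + 1 < v then v - 1 else v) ≤ t + M * τ := by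
  split_ifs with h
  · obtain ⟨u, rfl⟩ : ∃ u, v = u + 1 := ⟨v - 1, by omega⟩
    rw [Nat.add_sub_cancel]
    constructor
    · intro hu
      nlinarith
    · intro hu
      by_contra hlt
      obtain ⟨e, rfl⟩ : ∃ e, u = τ + e := ⟨u - τ, by omega⟩
      nlinarith
  · constructor
    · intro hu
      have h1 : v ≤ t := by omega
      nlinarith [Nat.mul_le_mul_left M hu]
    · intro hu
      by_contra hlt
      obtain ⟨e, rfl⟩ : ∃ e, v = τ + 1 + e := ⟨v - τ - 1, by omega⟩
      nlinarith

theorem gap_step (v : Fin q → Fin n →₀ ℕ) (hv : AntichainFam v) (j0 j1 : Fin q)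
    (hj : j0 ≠ j1) (i : Fin n) (t : ℕ) (ht : ∀ j, v j i ≠ t) (d : ℕ) :
    HasReg K n (monIdeal K v) d ↔ HasReg K n (monIdeal K fun j => gapE i t (v j)) d := by
  have h0 := antichain_ne_zero v hv j0 j1 hj
  have h0' := antichain_ne_zero _ (antichain_gap v hv i t ht) j0 j1 hj
  set M : ℕ := t + 1 + ∑ j, v j i with hM
  have hMt : t + 1 ≤ M := by omega
  have hMv : ∀ j, v j i ≤ M := fun j => by
    have := Finset.single_le_sum (f := fun j => v j i) (fun _ _ => Nat.zero_le _)
      (Finset.mem_univ j)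
    omega
  constructor
  · refine lemmaA _ _ (fun k => if k = i then M else 1) (fun k => if k = i then M + 1 else 1)
      (fun k => if k = i then M - t else 0) ?_ ?_ h0 h0' ?_ d
    · intro k; split_ifs <;> omega
    · intro k; split_ifs <;> omega
    · intro j k τ
      rw [gapE_apply]
      by_cases hk : k = i
      · subst hk
        simp only [true_and, if_true]
        exact arith_fwd M t _ τ (ht j) (hMv j) (by omega)
      · simp [hk]
  · rcases t with _ | t
    · refine hasReg_mul_X _ _ i j0 ?_ h0' d
      intro j
      ext k
      rw [Finsupp.add_apply, gapE_apply]
      by_cases hk : k = i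
      · subst hk
        have := ht j
        simp only [true_and, Finsupp.single_eq_same]
        split_ifs <;> omega
      · have hk' : i ≠ k := fun h => hk h.symm
        simp [hk, hk', Finsupp.single_apply]
    · refine lemmaA _ _ (fun k => if k = i then M + 1 else 1) (fun k => if k = i then M else 1)
        (fun k => if k = i then t else 0) ?_ ?_ h0' h0 ?_ d
      · intro k; split_ifs <;> omega
      · intro k; split_ifs <;> omega
      · intro j k τ
        rw [gapE_apply]
        by_cases hk : k = i
        · subst hk
          simp only [true_and, if_true]
          exact arith_bwd M t _ τ (ht j) (hMv j) (by omega)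
        · simp [hk]

theorem sgnExp_apply (v : Fin q → Fin n →₀ ℕ) (j : Fin q) (i : Fin n) :
    sgnExp v j i =
      ((Finset.univ.image fun k : Fin q => v k i).filter fun m => m < v j i).card := rfl

theorem sgnExp_apply' (v : Fin q → Fin n →₀ ℕ) (j : Fin q) (i : Fin n) :
    sgnExp v j i =
      ((Finset.univ.filter fun k : Fin q => v k i < v j i).image fun k => v k i).card := by
  rw [sgnExp_apply, Finset.filter_image]

theorem sgn_gap (v : Fin q → Fin n →₀ ℕ) (i : Fin n) (t : ℕ) (ht : ∀ j, v j i ≠ t) :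
    (sgnExp fun j => gapE i t (v j)) = sgnExp v := by
  funext j
  ext k
  rw [sgnExp_apply', sgnExp_apply']
  have hlt : ∀ l, gapE i t (v l) k < gapE i t (v j) k ↔ v l k < v j k := by
    intro l
    rw [← not_le, ← not_le, gapE_le_iff i t _ _ (ht j) (ht l)]
  simp only [hlt]
  have e : (fun l => gapE i t (v l) k) =
      (fun m => if k = i ∧ t < m then m - 1 else m) ∘ fun l => v l k := rfl
  rw [e, ← Finset.image_image, Finset.card_image_of_injOn]
  intro a ha b hb hab
  simp only [Finset.coe_image, Set.mem_image] at ha hb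
  obtain ⟨l, -, rfl⟩ := ha
  obtain ⟨l', -, rfl⟩ := hb
  change gapE i t (v l) k = gapE i t (v l') k at hab
  exact le_antisymm ((gapE_le_iff i t _ _ (ht l) (ht l') k).1 hab.le)
    ((gapE_le_iff i t _ _ (ht l') (ht l) k).1 hab.ge)

theorem sgn_eq (v : Fin q → Fin n →₀ ℕ)
    (h : ∀ i t, (∃ j, t < v j i) → ∃ j, v j i = t) : sgnExp v = v := by
  funext j
  ext i
  rw [sgnExp_apply]
  convert Finset.card_range (v j i)
  ext m
  simp only [Finset.mem_filter, Finset.mem_image, Finset.mem_univ, true_and, Finset.mem_range]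
  exact ⟨fun hm => hm.2, fun hm => ⟨h i m ⟨j, hm⟩, hm⟩⟩

theorem hasReg_sgn (m : ℕ) : ∀ (v : Fin q → Fin n →₀ ℕ) (_ : AntichainFam v) (j0 j1 : Fin q)
    (_ : j0 ≠ j1) (_ : ∑ j, ∑ i, v j i = m) (d : ℕ),
    HasReg K n (monIdeal K v) d ↔ HasReg K n (monIdeal K (sgnExp v)) d := by
  induction m using Nat.strong_induction_on with
  | _ m ih =>
    intro v hv j0 j1 hj hm d
    by_cases h : ∀ i t, (∃ j, t < v j i) → ∃ j, v j i = t
    · rw [sgn_eq v h]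
    · push Not at h
      obtain ⟨i, t, ⟨j, hjt⟩, ht⟩ := h
      rw [gap_step v hv j0 j1 hj i t ht d, ← sgn_gap v i t ht]
      have hle : ∀ j k, gapE i t (v j) k ≤ v j k := fun j k => by
        rw [gapE_apply]; split_ifs <;> omega
      refine ih (∑ j, ∑ k, gapE i t (v j) k) ?_ _ (antichain_gap v hv i t ht) j0 j1 hj rfl d
      rw [← hm]
      refine Finset.sum_lt_sum (fun j _ => Finset.sum_le_sum fun k _ => hle j k)
        ⟨j, Finset.mem_univ _, ?_⟩
      refine Finset.sum_lt_sum (fun k _ => hle j k) ⟨i, Finset.mem_univ _, ?_⟩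
      rw [gapE_apply, if_pos ⟨rfl, hjt⟩]
      omega

end Comb


/-- **Signature invariants of monomial ideals** (Theorem: depth).
Let `I` be a monomial ideal of `R = K[x_1,…,x_n]` that is not a principal ideal,
with minimal monomial generating set `G(I) = {x^{v_1},…,x^{v_q}}`.  Then
`depth(R/I) = depth(R/sgn(I))`. -/
theorem depth_quot_eq_depth_quot_sgn (K : Type) [Field K] (n q : ℕ)
    (v : Fin q → Fin n →₀ ℕ) (hv : AntichainFam v)
    (I : Ideal (MvPolynomial (Fin n) K)) (hI : I = monIdeal K v)
    (hnp : ¬ Submodule.IsPrincipal I) :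
    depthQuot K n I = depthQuot K n (monIdeal K (sgnExp v)) := by
  subst hI
  have hq : ∃ j0 j1 : Fin q, j0 ≠ j1 := by
    by_contra hne
    push Not at hne
    apply hnp
    rcases q with _ | q
    · refine ⟨⟨0, ?_⟩⟩
      rw [monIdeal, Set.range_eq_empty, Ideal.span_empty, Submodule.span_zero_singleton]
    · refine ⟨⟨monomial (v 0) 1, ?_⟩⟩
      rw [monIdeal, Ideal.span]
      congr 1
      ext p
      constructor
      · rintro ⟨j, rfl⟩
        rw [hne j 0]
        rfl
      · rintro rfl
        exact ⟨0, rfl⟩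
  obtain ⟨j0, j1, hj⟩ := hq
  have key := hasReg_sgn (K := K) _ v hv j0 j1 hj rfl
  unfold depthQuot
  congr 1
  ext d
  exact key d
end

section
/- Let I be a monomial ideal of R = K[x_1,…,x_n] of height at least 2. Then dim(R/I) = dim(R/sgn(I)), where dim denotes Krull dimension. -/
open MvPolynomial

/-- The height (codimension) of an ideal: the infimum of the heights of the prime ideals
containing it, where the height of a prime is the supremum of the lengths of chains of
primes descending from it. -/
noncomputable def heightOf {R : Type*} [CommRing R] (I : Ideal R) : ℕ∞ :=
  ⨅ p ∈ { p : PrimeSpectrum R | I ≤ p.asIdeal }, Order.height p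

theorem aux_mem {K : Type} [Field K] {n : ℕ} (p : Ideal (MvPolynomial (Fin n) K))
    [hp : p.IsPrime] (a : Fin n →₀ ℕ) :
    monomial a (1 : K) ∈ p ↔ ∃ i, a i ≠ 0 ∧ (X i : MvPolynomial (Fin n) K) ∈ p := by
  rw [MvPolynomial.monomial_eq, map_one, one_mul, Finsupp.prod, hp.prod_mem_iff]
  constructor
  · rintro ⟨i, hi, h⟩
    exact ⟨i, Finsupp.mem_support_iff.1 hi, hp.mem_of_pow_mem _ h⟩
  · rintro ⟨i, hi, h⟩
    exact ⟨i, Finsupp.mem_support_iff.2 hi, Ideal.pow_mem_of_mem _ h _ (Nat.pos_of_ne_zero hi)⟩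

theorem aux_exists {K : Type} [Field K] {n q : ℕ} (v : Fin q → Fin n →₀ ℕ)
    (hht : (2 : ℕ∞) ≤ heightOf (monIdeal K v)) (i : Fin n) : ∃ k, v k i = 0 := by
  by_contra! h
  have hp : (Ideal.span {(X i : MvPolynomial (Fin n) K)}).IsPrime :=
    (Ideal.span_singleton_prime (X_ne_zero i)).2 X_prime
  have hle : monIdeal K v ≤ Ideal.span {(X i : MvPolynomial (Fin n) K)} := by
    rw [monIdeal, Ideal.span_le]
    rintro _ ⟨j, rfl⟩
    exact (aux_mem _ _).2 ⟨i, h j, Ideal.mem_span_singleton_self _⟩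
  have h1 : heightOf (monIdeal K v) ≤ (Ideal.span {(X i : MvPolynomial (Fin n) K)}).height := by
    have e := PrimeSpectrum.height_eq_orderHeight
      (⟨_, hp⟩ : PrimeSpectrum (MvPolynomial (Fin n) K))
    refine le_of_le_of_eq ?_ e.symm
    exact iInf₂_le (⟨_, hp⟩ : PrimeSpectrum (MvPolynomial (Fin n) K)) hle
  have h2 := Ideal.height_le_one_of_isPrincipal_of_mem_minimalPrimes
    (Ideal.span {(X i : MvPolynomial (Fin n) K)}) (Ideal.span {(X i : MvPolynomial (Fin n) K)})
    (by rw [Ideal.minimalPrimes_eq_subsingleton_self]; rfl)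
  have h3 := hht.trans (h1.trans h2)
  exact absurd h3 (by decide)

theorem aux_supp {n q : ℕ} (v : Fin q → Fin n →₀ ℕ) (h : ∀ i, ∃ k, v k i = 0)
    (j : Fin q) (i : Fin n) : sgnExp v j i ≠ 0 ↔ v j i ≠ 0 := by
  obtain ⟨k, hk⟩ := h i
  simp only [sgnExp, Finsupp.equivFunOnFinite_symm_apply_apply, ne_eq, Finset.card_eq_zero]
  rw [← ne_eq, ← Finset.nonempty_iff_ne_empty]
  constructor
  · rintro ⟨m, hm⟩
    have := (Finset.mem_filter.1 hm).2
    omega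
  · intro hj
    exact ⟨0, Finset.mem_filter.2
      ⟨Finset.mem_image.2 ⟨k, Finset.mem_univ _, hk⟩, Nat.pos_of_ne_zero hj⟩⟩

/-- **Signature invariants of monomial ideals** (Theorem: Krull dimension).
Let `I` be a monomial ideal of `R = K[x_1,…,x_n]` of height at least `2`, with minimal
monomial generating set `G(I) = {x^{v_1},…,x^{v_q}}`.  Then
`dim(R/I) = dim(R/sgn(I))`. -/
theorem dim_quot_eq_dim_quot_sgn (K : Type) [Field K] (n q : ℕ)
    (v : Fin q → Fin n →₀ ℕ) (hv : AntichainFam v)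
    (I : Ideal (MvPolynomial (Fin n) K)) (hI : I = monIdeal K v)
    (hht : (2 : ℕ∞) ≤ heightOf I) :
    ringKrullDim (MvPolynomial (Fin n) K ⧸ I) =
      ringKrullDim (MvPolynomial (Fin n) K ⧸ monIdeal K (sgnExp v)) := by
  subst hI
  have h := aux_exists v hht
  rw [ringKrullDim_quotient, ringKrullDim_quotient]
  have e : PrimeSpectrum.zeroLocus (monIdeal K v : Set (MvPolynomial (Fin n) K)) =
      PrimeSpectrum.zeroLocus (monIdeal K (sgnExp v) : Set (MvPolynomial (Fin n) K)) := by
    ext p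
    simp only [monIdeal, PrimeSpectrum.zeroLocus_span, PrimeSpectrum.mem_zeroLocus,
      Set.range_subset_iff, SetLike.mem_coe, aux_mem, aux_supp v h]
  rw [e]
end

section
/- Let I be a monomial ideal of R = K[x_1,…,x_n] of height at least 2. Then the set of associated primes of I equals the set of associated primes of sgn(I), i.e., Ass(I) = Ass(sgn(I)). -/
open MvPolynomial

namespace SgnAss

variable {K : Type} [Field K] {n q : ℕ}

lemma mem_monIdeal (v : Fin q → Fin n →₀ ℕ) (f : MvPolynomial (Fin n) K) :
    f ∈ monIdeal K v ↔ ∀ m ∈ f.support, ∃ j, v j ≤ m := by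
  have h := mem_ideal_span_monomial_image (x := f) (s := Set.range v)
  rw [← Set.range_comp] at h
  simpa [monIdeal, Function.comp_def] using h

lemma mem_ass (I P : Ideal (MvPolynomial (Fin n) K)) :
    P ∈ associatedPrimes (MvPolynomial (Fin n) K) (MvPolynomial (Fin n) K ⧸ I) ↔
      P.IsPrime ∧ ∃ f, ∀ g, g ∈ P ↔ g * f ∈ I := by
  rw [AssociatedPrimes.mem_iff, isAssociatedPrime_iff]
  refine and_congr_right fun _ => ?_
  rw [(Ideal.Quotient.mk_surjective (I := I)).exists]
  refine exists_congr fun f => ?_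
  rw [SetLike.ext_iff]
  refine forall_congr' fun g => ?_
  have h : g * f ∈ I ↔ g • (Ideal.Quotient.mk I) f = 0 := by
    rw [← Ideal.Quotient.eq_zero_iff_mem, map_mul]
    rfl
  rw [Submodule.mem_colon_singleton, Submodule.mem_bot, h]

lemma supp_sub (f : MvPolynomial (Fin n) K) (d : Fin n →₀ ℕ) :
    (f - monomial d (f.coeff d)).support = f.support.erase d := by
  classical
  ext m
  simp only [mem_support_iff, coeff_sub, coeff_monomial, Finset.mem_erase]
  by_cases h : d = m
  · subst h; simp
  · simp [h, Ne.symm h]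

lemma mon_smul_mem (P : Ideal (MvPolynomial (Fin n) K)) {m : Fin n →₀ ℕ} (c : K)
    (h : monomial m (1 : K) ∈ P) : monomial m c ∈ P := by
  have := P.mul_mem_left (C c) h
  simpa [C_mul_monomial] using this

lemma mon_of_lead (P : Ideal (MvPolynomial (Fin n) K))
    (h : ∀ g ∈ P, g ≠ 0 → ∃ d ∈ g.support, monomial d (1 : K) ∈ P) :
    ∀ k : ℕ, ∀ g ∈ P, g.support.card = k → ∀ m ∈ g.support, monomial m (1 : K) ∈ P := by
  intro k
  induction k with
  | zero =>
    intro g _ hk m hm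
    rw [Finset.card_eq_zero] at hk
    simp [hk] at hm
  | succ k ih =>
    intro g hg hk m hm
    have hg0 : g ≠ 0 := by rintro rfl; simp at hm
    obtain ⟨d, hd, hdP⟩ := h g hg hg0
    by_cases hmd : m = d
    · rwa [hmd]
    · refine ih (g - monomial d (g.coeff d)) (P.sub_mem hg (mon_smul_mem P _ hdP)) ?_ m ?_
      · rw [supp_sub, Finset.card_erase_of_mem hd, hk]; rfl
      · rw [supp_sub]; exact Finset.mem_erase.2 ⟨hmd, hm⟩

lemma ass_lead (v : Fin q → Fin n →₀ ℕ) (P : Ideal (MvPolynomial (Fin n) K)) (hP : P.IsPrime) :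
    ∀ k : ℕ, ∀ f : MvPolynomial (Fin n) K, f.support.card = k →
      (∀ g, g ∈ P ↔ g * f ∈ monIdeal K v) →
      ∀ g ∈ P, g ≠ 0 → ∃ d ∈ g.support, monomial d (1 : K) ∈ P := by
  classical
  intro k
  induction k using Nat.strong_induction_on with
  | _ k ih =>
    intro f hk hf g hg hg0
    by_contra hcon
    push Not at hcon
    let o : MonomialOrder (Fin n) := MonomialOrder.lex
    have hf0 : f ≠ 0 := by
      rintro rfl
      apply hP.ne_top
      rw [Ideal.eq_top_iff_one, hf]
      simp
    have hdg : o.degree g ∈ g.support := (o.degree_mem_support_iff g).2 hg0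
    have hdf : o.degree f ∈ f.support := (o.degree_mem_support_iff f).2 hf0
    have hnot := hcon _ hdg
    set e := o.degree g with he
    set d := o.degree f with hd
    have hsum : ∃ j, v j ≤ e + d := by
      refine (mem_monIdeal v (g * f)).1 ((hf g).1 hg) _ ?_
      rw [mem_support_iff, o.coeff_mul_of_degree_add]
      exact mul_ne_zero (o.leadingCoeff_ne_zero_iff.2 hg0) (o.leadingCoeff_ne_zero_iff.2 hf0)
    have hmem : monomial (e + d) (f.coeff d) ∈ monIdeal K v := by
      rw [mem_monIdeal]
      intro m hm
      have := support_monomial_subset hm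
      rw [Finset.mem_singleton] at this
      rwa [this]
    refine absurd (ih _ ?_ (monomial e (1 : K) * (f - monomial d (f.coeff d))) rfl ?_ g hg hg0) ?_
    · have h1 := Finset.card_le_card
        (support_mul (monomial e (1 : K)) (f - monomial d (f.coeff d)))
      have h2 := Finset.card_add_le (s := (monomial e (1 : K)).support)
        (t := (f - monomial d (f.coeff d)).support)
      have h3 : (monomial e (1 : K)).support.card ≤ 1 := by
        simpa using Finset.card_le_card (support_monomial_subset (s := e) (a := (1 : K)))
      rw [supp_sub] at h1 h2
      rw [Finset.card_erase_of_mem hdf] at h2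
      have h4 : 0 < f.support.card := Finset.card_pos.2 ⟨_, hdf⟩
      have h5 := Nat.mul_le_mul_right (f.support.card - 1) h3
      omega
    · intro u
      have h1 : u ∈ P ↔ u * monomial e (1 : K) ∈ P :=
        ⟨fun h => P.mul_mem_right _ h, fun h => (hP.mem_or_mem h).resolve_right hnot⟩
      rw [h1, hf]
      have h2 : u * (monomial e (1 : K) * (f - monomial d (f.coeff d))) =
          u * monomial e (1 : K) * f - u * monomial (e + d) (f.coeff d) := by
        rw [mul_sub, monomial_mul, one_mul]; ring
      rw [h2]
      exact (Submodule.sub_mem_iff_left _ (Ideal.mul_mem_left _ _ hmem)).symm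
    · push Not
      exact hcon

lemma monomial_mem_prime (P : Ideal (MvPolynomial (Fin n) K)) (hP : P.IsPrime)
    (b : Fin n →₀ ℕ) : monomial b (1 : K) ∈ P ↔ ∃ i, X i ∈ P ∧ b i ≠ 0 := by
  rw [monomial_eq, C_1, one_mul, Finsupp.prod, hP.prod_mem_iff]
  constructor
  · rintro ⟨i, hi, h⟩
    exact ⟨i, hP.mem_of_pow_mem _ h, Finsupp.mem_support_iff.1 hi⟩
  · rintro ⟨i, h, hi⟩
    exact ⟨i, Finsupp.mem_support_iff.2 hi, P.pow_mem_of_mem h _ (Nat.pos_of_ne_zero hi)⟩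

lemma ass_iff (v : Fin q → Fin n →₀ ℕ) (P : Ideal (MvPolynomial (Fin n) K)) :
    P ∈ associatedPrimes (MvPolynomial (Fin n) K) (MvPolynomial (Fin n) K ⧸ monIdeal K v) ↔
      P.IsPrime ∧ (∀ g, g ∈ P ↔ ∀ m ∈ g.support, monomial m (1 : K) ∈ P) ∧
        ∃ a : Fin n →₀ ℕ, ∀ b, (∃ i, (X i : MvPolynomial (Fin n) K) ∈ P ∧ b i ≠ 0) ↔
          ∃ j, v j ≤ b + a := by
  classical
  rw [mem_ass]
  refine and_congr_right fun hP => ?_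
  simp_rw [← monomial_mem_prime P hP]
  have key : ∀ (g : MvPolynomial (Fin n) K) a m, m ∈ (g * monomial a (1 : K)).support ↔
      ∃ b ∈ g.support, m = b + a := by
    intro g a m
    rw [mem_support_iff, coeff_mul_monomial']
    constructor
    · intro h
      split_ifs at h with h'
      · exact ⟨m - a, by simpa using h, (tsub_add_cancel_of_le h').symm⟩
      · exact absurd rfl h
    · rintro ⟨b, hb, rfl⟩
      simpa using hb
  constructor
  · rintro ⟨f, hf⟩
    have hmon := mon_of_lead P (ass_lead v P hP _ f rfl hf)
    refine ⟨fun g => ⟨fun hg => hmon _ g hg rfl, fun h => ?_⟩, ?_⟩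
    · rw [g.as_sum]
      exact P.sum_mem fun m hm => mon_smul_mem P _ (h m hm)
    · by_contra hcon
      push Not at hcon
      have h1 : ∀ a : Fin n →₀ ℕ, ∃ b, a ∈ f.support →
          (monomial b (1 : K) ∉ P ∧ ∃ j, v j ≤ b + a) := by
        intro a
        obtain ⟨b, hb⟩ := hcon a
        refine ⟨b, fun ha => ?_⟩
        rcases hb with ⟨h, h'⟩ | h
        · exfalso
          have h2 := (hf _).1 h
          rw [mem_monIdeal, mul_comm] at h2
          obtain ⟨j, hj⟩ := h2 (b + a) ((key f b _).2 ⟨a, ha, add_comm _ _⟩)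
          exact h' j hj
        · exact h
      choose B hB using h1
      have h2 : ∏ a ∈ f.support, monomial (B a) (1 : K) ∈ P := by
        rw [hf, ← monomial_sum_one, mem_monIdeal]
        intro m hm
        rw [mul_comm, key] at hm
        obtain ⟨a, ha, rfl⟩ := hm
        obtain ⟨j, hj⟩ := (hB a ha).2
        refine ⟨j, hj.trans ?_⟩
        rw [add_comm]
        exact add_le_add_right
          (Finset.single_le_sum (f := B) (fun _ _ => zero_le) ha) a
      rw [hP.prod_mem_iff] at h2
      obtain ⟨a, ha, h⟩ := h2
      exact (hB a ha).1 h
  · rintro ⟨hmon, a, ha⟩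
    refine ⟨monomial a 1, fun g => ?_⟩
    rw [hmon, mem_monIdeal]
    simp_rw [key, ha]
    constructor
    · rintro h m ⟨b, hb, rfl⟩
      exact h b hb
    · intro h b hb
      exact h _ ⟨b, hb, rfl⟩

lemma comb_iff (v : Fin q → Fin n →₀ ℕ) (S : Fin n → Prop) :
    (∃ a : Fin n →₀ ℕ, ∀ b : Fin n →₀ ℕ, (∃ i, S i ∧ b i ≠ 0) ↔ ∃ j, v j ≤ b + a) ↔
    ∃ a : Fin n → ℕ, (∀ j, ∃ i, S i ∧ a i < v j i) ∧
      ∀ i, S i → ∃ j, v j i ≤ a i + 1 ∧ ∀ k, k ≠ i → v j k ≤ a k := by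
  classical
  constructor
  · rintro ⟨a, ha⟩
    refine ⟨a, fun j => ?_, fun i hi => ?_⟩
    · by_contra hcon
      push Not at hcon
      let b : Fin n →₀ ℕ := Finsupp.equivFunOnFinite.symm fun i => if S i then 0 else v j i
      obtain ⟨i, hi, hbi⟩ := (ha b).2 ⟨j, fun i => by
        by_cases h : S i
        · simpa [b, h] using hcon i h
        · simp [b, h]⟩
      simp [b, hi] at hbi
    · obtain ⟨j, hj⟩ := (ha (Finsupp.single i 1)).1 ⟨i, hi, by simp⟩
      refine ⟨j, ?_, fun k hk => ?_⟩
      · have := hj i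
        simp at this
        omega
      · have := hj k
        simpa [Finsupp.single_apply, hk.symm] using this
  · rintro ⟨a, h1, h2⟩
    -- enlarge nothing: work with `a` directly
    refine ⟨Finsupp.equivFunOnFinite.symm fun i => if S i then a i else
      a i + ∑ j, v j i, fun b => ⟨?_, ?_⟩⟩
    · rintro ⟨i, hi, hb⟩
      obtain ⟨j, hj, hj'⟩ := h2 i hi
      refine ⟨j, fun k => ?_⟩
      have h3 : a k ≤ if S k then a k else a k + ∑ j, v j k := by split_ifs <;> omega
      by_cases hk : k = i
      · subst hk
        simp only [Finsupp.add_apply, Finsupp.equivFunOnFinite_symm_apply_apply]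
        omega
      · have := hj' k hk
        simp only [Finsupp.add_apply, Finsupp.equivFunOnFinite_symm_apply_apply]
        omega
    · rintro ⟨j, hj⟩
      obtain ⟨i, hi, hlt⟩ := h1 j
      refine ⟨i, hi, fun hb => ?_⟩
      have := hj i
      simp [hi, hb] at this
      omega

lemma comb_transfer (v w : Fin q → Fin n →₀ ℕ) (S : Fin n → Prop)
    (hle : ∀ i j k, v j i < v k i ↔ w j i < w k i)
    (h0 : ∀ i, ∃ j, v j i = 0)
    (h : ∃ a : Fin n → ℕ, (∀ j, ∃ i, S i ∧ a i < v j i) ∧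
      ∀ i, S i → ∃ j, v j i ≤ a i + 1 ∧ ∀ k, k ≠ i → v j k ≤ a k) :
    ∃ a : Fin n → ℕ, (∀ j, ∃ i, S i ∧ a i < w j i) ∧
      ∀ i, S i → ∃ j, w j i ≤ a i + 1 ∧ ∀ k, k ≠ i → w j k ≤ a k := by
  classical
  obtain ⟨a, h1, h2⟩ := h
  choose J hJ hJ' using h2
  have hJe : ∀ i hi, v (J i hi) i = a i + 1 := by
    intro i hi
    obtain ⟨k, hk, hlt⟩ := h1 (J i hi)
    have : k = i := by
      by_contra hne
      have := hJ' i hi k hne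
      omega
    subst this
    have := hJ k hi
    omega
  have hw : ∀ i hi, 0 < w (J i hi) i := by
    intro i hi
    obtain ⟨j, hj⟩ := h0 i
    have := (hle i j (J i hi)).1 (by rw [hj, hJe]; omega)
    omega
  have hiff : ∀ i hi j, v j i ≤ a i ↔ w j i ≤ w (J i hi) i - 1 := by
    intro i hi j
    have h3 := hle i j (J i hi)
    have h4 := hw i hi
    rw [hJe] at h3
    omega
  refine ⟨fun i => if hi : S i then w (J i hi) i - 1 else ∑ j, w j i, fun j => ?_,
    fun i hi => ⟨J i hi, ?_, fun k hk => ?_⟩⟩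
  · obtain ⟨i, hi, hlt⟩ := h1 j
    refine ⟨i, hi, ?_⟩
    have := hiff i hi j
    simp only [hi, dite_true]
    omega
  · simp only [hi, dite_true]
    omega
  · by_cases hk' : S k
    · simp only [hk', dite_true]
      exact (hiff k hk' _).1 (hJ' i hi k hk)
    · simp only [hk', dite_false]
      exact Finset.single_le_sum (f := fun j => w j k) (fun _ _ => Nat.zero_le _)
        (Finset.mem_univ _)

lemma sgn_lt (v : Fin q → Fin n →₀ ℕ) (i : Fin n) (j k : Fin q) :
    v j i < v k i ↔ sgnExp v j i < sgnExp v k i := by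
  have mono : ∀ j k, v j i ≤ v k i → sgnExp v j i ≤ sgnExp v k i := by
    intro j k h
    simp only [sgnExp, Finsupp.equivFunOnFinite_symm_apply_apply]
    refine Finset.card_le_card fun m hm => ?_
    rw [Finset.mem_filter] at hm ⊢
    exact ⟨hm.1, hm.2.trans_le h⟩
  constructor
  · intro h
    simp only [sgnExp, Finsupp.equivFunOnFinite_symm_apply_apply]
    refine Finset.card_lt_card (Finset.ssubset_iff_of_subset (fun m hm => ?_) |>.2 ⟨v j i, ?_, ?_⟩)
    · rw [Finset.mem_filter] at hm ⊢
      exact ⟨hm.1, hm.2.trans h⟩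
    · simp [h]
    · simp
  · intro h
    by_contra hc
    exact absurd (mono k j (not_lt.1 hc)) (not_le.2 h)

lemma sgn_zero (v : Fin q → Fin n →₀ ℕ) (i : Fin n) (j : Fin q) (h : v j i = 0) :
    sgnExp v j i = 0 := by
  simp [sgnExp, h]

lemma exists_zero (v : Fin q → Fin n →₀ ℕ) (hht : (2 : ℕ∞) ≤ heightOf (monIdeal K v))
    (i : Fin n) : ∃ j, v j i = 0 := by
  by_contra hcon
  push Not at hcon
  have hX : Prime (X i : MvPolynomial (Fin n) K) := X_prime
  have hp : (Ideal.span {(X i : MvPolynomial (Fin n) K)}).IsPrime :=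
    (Ideal.span_singleton_prime hX.ne_zero).2 hX
  have h1 : heightOf (monIdeal K v) ≤
      Order.height (⟨_, hp⟩ : PrimeSpectrum (MvPolynomial (Fin n) K)) := by
    refine iInf₂_le _ ?_
    change monIdeal K v ≤ Ideal.span {X i}
    refine Ideal.span_le.2 ?_
    rintro _ ⟨j, rfl⟩
    rw [SetLike.mem_coe, Ideal.mem_span_singleton, X_dvd_monomial]
    exact Or.inr (hcon j)
  rw [← PrimeSpectrum.height_eq_orderHeight] at h1
  have h2 := (hht.trans h1).trans (Ideal.height_span_singleton_le_one hX.not_isUnit)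
  exact absurd h2 (by decide)

end SgnAss

/-- **Signature invariants of monomial ideals** (Theorem: associated primes).
Let `I` be a monomial ideal of `R = K[x_1,…,x_n]` of height at least `2`, with minimal
monomial generating set `G(I) = {x^{v_1},…,x^{v_q}}`.  Then `Ass(I) = Ass(sgn(I))`,
where `Ass(I)` is the set of associated primes of the `R`-module `R/I`. -/
theorem ass_quot_eq_ass_quot_sgn (K : Type) [Field K] (n q : ℕ)
    (v : Fin q → Fin n →₀ ℕ) (hv : AntichainFam v)
    (I : Ideal (MvPolynomial (Fin n) K)) (hI : I = monIdeal K v)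
    (hht : (2 : ℕ∞) ≤ heightOf I) :
    associatedPrimes (MvPolynomial (Fin n) K) (MvPolynomial (Fin n) K ⧸ I) =
      associatedPrimes (MvPolynomial (Fin n) K)
        (MvPolynomial (Fin n) K ⧸ monIdeal K (sgnExp v)) := by
  subst hI
  have h0 := SgnAss.exists_zero v hht
  ext P
  rw [SgnAss.ass_iff, SgnAss.ass_iff, SgnAss.comb_iff, SgnAss.comb_iff]
  refine and_congr_right fun _ => and_congr_right fun _ => ⟨?_, ?_⟩
  · exact SgnAss.comb_transfer v (sgnExp v) _ (SgnAss.sgn_lt v) h0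
  · exact SgnAss.comb_transfer (sgnExp v) v _ (fun i j k => (SgnAss.sgn_lt v i j k).symm)
      fun i => (h0 i).imp fun j hj => SgnAss.sgn_zero v i j hj
end
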